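/- arXiv:1601.04749 — 2 statements merged into one kernel-verified Lean document; each statement's English description precedes it below -/
import Mathlib

section
/- Let {(I_m, S_m)}_{m=1}^{M} be an FOC for a CM4-fair rate allocation matrix R, and let m, l be two cluster indices with r^{C_m} > r^{C_l}. Then no user i ∈ I_l with positive total rate r_i > 0 is eligible to any server of cluster m: π_{i,k} = 0 for every k ∈ S_m. -/
open Finset

/-- A rate allocation matrix: nonnegative, zero for non-backlogged users,
zero for ineligible pairs, and work-conserving at each server. -/
def IsRateAlloc {N K : ℕ} (B : Set (Fin N)) (π : Fin N → Fin K → Bool)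
    (ρ : Fin K → ℝ) (R : Fin N → Fin K → ℝ) : Prop :=
  (∀ i k, 0 ≤ R i k) ∧
  (∀ i k, i ∉ B → R i k = 0) ∧
  (∀ i k, π i k = false → R i k = 0) ∧
  (∀ k, (∃ i ∈ B, π i k = true) → ∑ i, R i k = ρ k)

/-- Total service rate of user `i`. -/
noncomputable def totalRate {N K : ℕ} (R : Fin N → Fin K → ℝ) (i : Fin N) : ℝ :=
  ∑ k, R i k

/-- Constrained multi-user multi-server max-min (CM4) fairness. -/
def CM4Fair {N K : ℕ} (B : Set (Fin N)) (π : Fin N → Fin K → Bool)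
    (ρ : Fin K → ℝ) (φ : Fin N → ℝ) (R : Fin N → Fin K → ℝ) : Prop :=
  IsRateAlloc B π ρ R ∧
  ∀ R' : Fin N → Fin K → ℝ, IsRateAlloc B π ρ R' →
    ∀ i, totalRate R i / φ i < totalRate R' i / φ i →
      ∃ j, totalRate R j / φ j ≤ totalRate R i / φ i ∧
        totalRate R' j / φ j < totalRate R j / φ j

/-- A Fairness Oriented Clustering (FOC) for a rate allocation matrix `R`:
a partition of users into `M` nonempty classes and of servers into `M`
pairwise disjoint classes, with a common normalized rate per cluster,
distinct cluster rates, and the server-membership characterization. -/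
structure IsFOC {N K M : ℕ} (π : Fin N → Fin K → Bool) (φ : Fin N → ℝ)
    (R : Fin N → Fin K → ℝ)
    (I : Fin M → Finset (Fin N)) (S : Fin M → Finset (Fin K))
    (rC : Fin M → ℝ) : Prop where
  I_nonempty : ∀ m, (I m).Nonempty
  I_disjoint : ∀ m l, m ≠ l → Disjoint (I m) (I l)
  I_cover : ∀ i, ∃ m, i ∈ I m
  S_disjoint : ∀ m l, m ≠ l → Disjoint (S m) (S l)
  S_cover : ∀ k, ∃ m, k ∈ S m
  rate_eq : ∀ m, ∀ i ∈ I m, totalRate R i / φ i = rC m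
  rate_ne : ∀ m l, m ≠ l → rC m ≠ rC l
  server_iff : ∀ m k, (k ∈ S m ∧ 0 < rC m) ↔ ∃ i ∈ I m, 0 < R i k

/-! Suppose user `j` draws a positive rate from server `k`, to which a backlogged user `i` with a
smaller normalized rate is eligible. Handing `j`'s share of `k` over to `i` yields another rate
allocation matrix, in which `i` gains and only `j` loses; as `j` was better off than `i`, this
contradicts fairness. So whoever is served by `k` has a normalized rate at most that of any
backlogged user eligible to `k`. -/

section Transfer

variable {ι κ α : Type*} [DecidableEq ι] [DecidableEq κ] [AddCommGroup α]

/-- The matrix obtained from `R` by moving `δ` units of the rate of server `k` from user `j` to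
user `i`. As the gain and the loss are added independently, `i = j` leaves `R` unchanged. -/
def transfer (R : ι → κ → α) (k : κ) (j i : ι) (δ : α) : ι → κ → α :=
  fun a b => R a b + (if a = i ∧ b = k then δ else 0) - (if a = j ∧ b = k then δ else 0)

theorem sum_server_transfer [Fintype ι] (R : ι → κ → α) (k : κ) (j i : ι) (δ : α) (b : κ) :
    ∑ a, transfer R k j i δ a b = ∑ a, R a b := by
  simp [transfer, sum_add_distrib, ite_and]

theorem sum_user_transfer [Fintype κ] (R : ι → κ → α) (k : κ) (j i : ι) (δ : α) (a : ι) :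
    ∑ b, transfer R k j i δ a b =
      ∑ b, R a b + (if a = i then δ else 0) - (if a = j then δ else 0) := by
  simp [transfer, sum_add_distrib, ite_and]

variable [PartialOrder α] {R : ι → κ → α} {k : κ} {j i : ι} {δ : α}

theorem transfer_nonneg [IsOrderedAddMonoid α] (hR : ∀ a b, 0 ≤ R a b) (hδ : 0 ≤ δ)
    (hδR : δ ≤ R j k) (a : ι) (b : κ) : 0 ≤ transfer R k j i δ a b := by
  have gain_nonneg : 0 ≤ if a = i ∧ b = k then δ else 0 := ite_nonneg hδ le_rfl
  have loss_le : (if a = j ∧ b = k then δ else 0) ≤ R a b := by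
    split_ifs with h
    · rwa [h.1, h.2]
    · exact hR a b
  exact sub_nonneg.2 (loss_le.trans (le_add_of_nonneg_right gain_nonneg))

theorem transfer_eq_zero (hδ : 0 ≤ δ) (hδR : δ ≤ R j k) {a : ι} {b : κ} (hab : R a b = 0)
    (hne : ¬(a = i ∧ b = k)) : transfer R k j i δ a b = 0 := by
  have no_loss : (if a = j ∧ b = k then δ else 0) = 0 := by
    split_ifs with h
    · rw [h.1, h.2] at hab
      exact le_antisymm (hδR.trans_eq hab) hδ
    · rfl
  rw [transfer, hab, if_neg hne, no_loss, add_zero, sub_zero]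

end Transfer

section Fairness

variable {N K : ℕ} {B : Set (Fin N)} {π : Fin N → Fin K → Bool} {ρ : Fin K → ℝ} {φ : Fin N → ℝ}
  {R : Fin N → Fin K → ℝ}

theorem totalRate_transfer (R : Fin N → Fin K → ℝ) (k : Fin K) (j i : Fin N) (δ : ℝ) (a : Fin N) :
    totalRate (transfer R k j i δ) a =
      totalRate R a + (if a = i then δ else 0) - (if a = j then δ else 0) :=
  sum_user_transfer R k j i δ a

theorem IsRateAlloc.transfer (hR : IsRateAlloc B π ρ R) {k : Fin K} {j i : Fin N} {δ : ℝ}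
    (hi : i ∈ B) (hik : π i k = true) (hδ : 0 ≤ δ) (hδR : δ ≤ R j k) :
    IsRateAlloc B π ρ (transfer R k j i δ) := by
  obtain ⟨nonneg, backlogged, eligible, work_conserving⟩ := hR
  refine ⟨transfer_nonneg nonneg hδ hδR, fun a b ha => ?_, fun a b hab => ?_, fun b hb => ?_⟩
  · refine transfer_eq_zero hδ hδR (backlogged a b ha) ?_
    rintro ⟨rfl, -⟩
    exact ha hi
  · refine transfer_eq_zero hδ hδR (eligible a b hab) ?_
    rintro ⟨rfl, rfl⟩
    exact Bool.false_ne_true (hab.symm.trans hik)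
  · rw [sum_server_transfer, work_conserving b hb]

theorem IsRateAlloc.totalRate_nonneg (hR : IsRateAlloc B π ρ R) (i : Fin N) :
    0 ≤ totalRate R i :=
  sum_nonneg fun k _ => hR.1 i k

theorem IsRateAlloc.mem_of_totalRate_pos (hR : IsRateAlloc B π ρ R) {i : Fin N}
    (hi : 0 < totalRate R i) : i ∈ B := by
  by_contra hiB
  exact hi.ne' (sum_eq_zero fun k _ => hR.2.1 i k hiB)

theorem CM4Fair.normalizedRate_le_of_served (hR : CM4Fair B π ρ φ R) {i j : Fin N} {k : Fin K}
    (hφ : 0 < φ i) (hi : i ∈ B) (hik : π i k = true) (hjk : 0 < R j k) :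
    totalRate R j / φ j ≤ totalRate R i / φ i := by
  by_contra! hij
  have hne : i ≠ j := by
    rintro rfl
    exact hij.false
  have i_gains :
      totalRate R i / φ i < totalRate (transfer R k j i (R j k)) i / φ i := by
    refine div_lt_div_of_pos_right ?_ hφ
    rw [totalRate_transfer, if_pos rfl, if_neg hne]
    linarith
  obtain ⟨a, a_le_i, a_loses⟩ := hR.2 _ (hR.1.transfer hi hik hjk.le le_rfl) i i_gains
  have a_ne_i : a ≠ i := by
    rintro rfl
    exact i_gains.not_gt a_loses
  have a_ne_j : a ≠ j := by
    rintro rfl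
    exact hij.not_ge a_le_i
  rw [totalRate_transfer, if_neg a_ne_i, if_neg a_ne_j, add_zero, sub_zero] at a_loses
  exact a_loses.false

end Fairness

theorem foc_no_eligibility_to_faster_cluster_general {N K M : ℕ}
    {B : Set (Fin N)} {π : Fin N → Fin K → Bool} {ρ : Fin K → ℝ} {φ : Fin N → ℝ}
    (hφ : ∀ i, 0 < φ i) {R : Fin N → Fin K → ℝ} (hfair : CM4Fair B π ρ φ R)
    {I : Fin M → Finset (Fin N)} {S : Fin M → Finset (Fin K)} {rC : Fin M → ℝ}
    (hfoc : IsFOC π φ R I S rC) {m l : Fin M} (hrate : rC l < rC m)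
    {i : Fin N} (hi : i ∈ I l) (hiB : i ∈ B) :
    ∀ k ∈ S m, π i k = false := by
  intro k hk
  have rC_l_nonneg : 0 ≤ rC l := by
    rw [← hfoc.rate_eq l i hi]
    exact div_nonneg (hfair.1.totalRate_nonneg i) (hφ i).le
  obtain ⟨j, hj, hjk⟩ := (hfoc.server_iff m k).1 ⟨hk, rC_l_nonneg.trans_lt hrate⟩
  by_contra hik
  have hle := hfair.normalizedRate_le_of_served (hφ i) hiB (Bool.eq_true_of_not_eq_false hik) hjk
  rw [hfoc.rate_eq m j hj, hfoc.rate_eq l i hi] at hle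
  exact hle.not_gt hrate

/-- If cluster `m` has a strictly larger cluster rate than cluster `l`, then
no user of cluster `l` with positive total rate is eligible to any server of
cluster `m`. -/
theorem foc_no_eligibility_to_faster_cluster {N K M : ℕ} (hN : 0 < N) (hK : 0 < K)
    (B : Set (Fin N)) (π : Fin N → Fin K → Bool) (ρ : Fin K → ℝ) (φ : Fin N → ℝ)
    (hφ : ∀ i, 0 < φ i) (hρ : ∀ k, 0 ≤ ρ k)
    (hrow : ∀ i, ∃ k, π i k = true) (hcol : ∀ k, ∃ i, π i k = true)
    (R : Fin N → Fin K → ℝ) (hfair : CM4Fair B π ρ φ R)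
    (I : Fin M → Finset (Fin N)) (S : Fin M → Finset (Fin K)) (rC : Fin M → ℝ)
    (hfoc : IsFOC π φ R I S rC)
    (m l : Fin M) (hrate : rC l < rC m)
    (i : Fin N) (hi : i ∈ I l) (hri : 0 < totalRate R i) :
    ∀ k ∈ S m, π i k = false :=
  foc_no_eligibility_to_faster_cluster_general hφ hfair hfoc hrate hi
    (hfair.1.mem_of_totalRate_pos hri)
end

section
/- Let {(I_m, S_m)}_{m=1}^{M} be an FOC for a CM4-fair rate allocation matrix R and let C = (I, S) = (I_m, S_m) be a cluster with cluster rate r^C > 0. Let Ŝ ⊆ S be nonempty and let Î = {i ∈ I : π_{i,k} = 1 for some k ∈ Ŝ}. Then Σ_{k ∈ Ŝ} ρ_k ≤ r^C · Σ_{i ∈ Î} φ_i. -/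
open Finset

section

variable {N K : ℕ} {B : Set (Fin N)} {π : Fin N → Fin K → Bool} {ρ : Fin K → ℝ}
  {φ : Fin N → ℝ} {R : Fin N → Fin K → ℝ} {i : Fin N} {k : Fin K}

lemma sum_le_totalRate (hR : ∀ k, 0 ≤ R i k) (T : Finset (Fin K)) :
    ∑ k ∈ T, R i k ≤ totalRate R i :=
  sum_le_univ_sum_of_nonneg hR

namespace IsRateAlloc

lemma mem_backlogged_of_pos (hR : IsRateAlloc B π ρ R) (hik : 0 < R i k) : i ∈ B :=
  by_contra fun hi => hik.ne' (hR.2.1 i k hi)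

lemma eligible_of_pos (hR : IsRateAlloc B π ρ R) (hik : 0 < R i k) : π i k = true :=
  Bool.eq_true_of_not_eq_false fun hπ => hik.ne' (hR.2.2.1 i k hπ)

lemma sum_eq_capacity_of_pos (hR : IsRateAlloc B π ρ R) (hik : 0 < R i k) :
    ∑ j, R j k = ρ k :=
  hR.2.2.2 k ⟨i, hR.mem_backlogged_of_pos hik, hR.eligible_of_pos hik⟩

end IsRateAlloc

namespace IsFOC

variable {M : ℕ} {I : Fin M → Finset (Fin N)} {S : Fin M → Finset (Fin K)}
  {rC : Fin M → ℝ} {m : Fin M}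

lemma totalRate_eq_mul (hfoc : IsFOC π φ R I S rC) (hi : i ∈ I m) (hφ : φ i ≠ 0) :
    totalRate R i = rC m * φ i :=
  (div_eq_iff hφ).mp (hfoc.rate_eq m i hi)

lemma mem_users_of_pos (hfoc : IsFOC π φ R I S rC) (hk : k ∈ S m) (hik : 0 < R i k) :
    i ∈ I m := by
  obtain ⟨l, hil⟩ := hfoc.I_cover i
  have hkl : k ∈ S l := ((hfoc.server_iff l k).mpr ⟨i, hil, hik⟩).1
  have hlm : l = m := by_contra fun hne => disjoint_left.mp (hfoc.S_disjoint l m hne) hkl hk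
  exact hlm ▸ hil

-- Disjointness of the server classes keeps users of other clusters from drawing on `k`, so the
-- whole capacity of `k` is spent inside cluster `m`.
lemma sum_eq_capacity (hfoc : IsFOC π φ R I S rC) (hR : IsRateAlloc B π ρ R)
    (hr : 0 < rC m) (hk : k ∈ S m) {J : Finset (Fin N)}
    (hJ : ∀ i ∈ I m, π i k = true → i ∈ J) : ∑ i ∈ J, R i k = ρ k := by
  obtain ⟨j, -, hjk⟩ := (hfoc.server_iff m k).mp ⟨hk, hr⟩
  have rate_eq_zero : ∀ i, i ∉ J → R i k = 0 := fun i hi => by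
    by_contra hne
    have hik : 0 < R i k := (hR.1 i k).lt_of_ne' hne
    exact hi (hJ i (hfoc.mem_users_of_pos hk hik) (hR.eligible_of_pos hik))
  calc ∑ i ∈ J, R i k
    _ = ∑ i, R i k := sum_subset (subset_univ J) fun i _ hi => rate_eq_zero i hi
    _ = ρ k := hR.sum_eq_capacity_of_pos hjk

end IsFOC

end

theorem foc_subcluster_capacity_upper_general {N K M : ℕ} {B : Set (Fin N)}
    {π : Fin N → Fin K → Bool} {ρ : Fin K → ℝ} {φ : Fin N → ℝ} (hφ : ∀ i, φ i ≠ 0)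
    {R : Fin N → Fin K → ℝ} (hR : IsRateAlloc B π ρ R)
    {I : Fin M → Finset (Fin N)} {S : Fin M → Finset (Fin K)} {rC : Fin M → ℝ}
    (hfoc : IsFOC π φ R I S rC) {m : Fin M} (hr : 0 < rC m)
    {Shat : Finset (Fin K)} (hShat : Shat ⊆ S m) {Ihat : Finset (Fin N)}
    (hIhat : ∀ i, i ∈ Ihat ↔ i ∈ I m ∧ ∃ k ∈ Shat, π i k = true) :
    ∑ k ∈ Shat, ρ k ≤ rC m * ∑ i ∈ Ihat, φ i := by
  have capacity_eq : ∀ k ∈ Shat, ρ k = ∑ i ∈ Ihat, R i k := fun k hk =>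
    (hfoc.sum_eq_capacity hR hr (hShat hk) fun i hi hπ => (hIhat i).mpr ⟨hi, k, hk, hπ⟩).symm
  calc ∑ k ∈ Shat, ρ k
    _ = ∑ k ∈ Shat, ∑ i ∈ Ihat, R i k := sum_congr rfl capacity_eq
    _ = ∑ i ∈ Ihat, ∑ k ∈ Shat, R i k := sum_comm
    _ ≤ ∑ i ∈ Ihat, totalRate R i := sum_le_sum fun i _ => sum_le_totalRate (hR.1 i) Shat
    _ = ∑ i ∈ Ihat, rC m * φ i :=
      sum_congr rfl fun i hi => hfoc.totalRate_eq_mul ((hIhat i).mp hi).1 (hφ i)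
    _ = rC m * ∑ i ∈ Ihat, φ i := (mul_sum Ihat φ (rC m)).symm

/-- In a cluster `C = (I m, S m)` of an FOC with positive cluster rate, for
any nonempty subset `Shat` of the cluster's servers, its total capacity is
at most `r^C` times the total weight of the users of the cluster eligible to
some server of `Shat`. -/
theorem foc_subcluster_capacity_upper {N K M : ℕ} (hN : 0 < N) (hK : 0 < K)
    (B : Set (Fin N)) (π : Fin N → Fin K → Bool) (ρ : Fin K → ℝ) (φ : Fin N → ℝ)
    (hφ : ∀ i, 0 < φ i) (hρ : ∀ k, 0 ≤ ρ k)
    (hrow : ∀ i, ∃ k, π i k = true) (hcol : ∀ k, ∃ i, π i k = true)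
    (R : Fin N → Fin K → ℝ) (hfair : CM4Fair B π ρ φ R)
    (I : Fin M → Finset (Fin N)) (S : Fin M → Finset (Fin K)) (rC : Fin M → ℝ)
    (hfoc : IsFOC π φ R I S rC)
    (m : Fin M) (hr : 0 < rC m)
    (Shat : Finset (Fin K)) (hShat : Shat ⊆ S m) (hSne : Shat.Nonempty)
    (Ihat : Finset (Fin N))
    (hIhat : ∀ i, i ∈ Ihat ↔ i ∈ I m ∧ ∃ k ∈ Shat, π i k = true) :
    ∑ k ∈ Shat, ρ k ≤ rC m * ∑ i ∈ Ihat, φ i :=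
  foc_subcluster_capacity_upper_general (fun i => (hφ i).ne') hfair.1 hfoc hr hShat hIhat
end
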